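/- Let q be real with 0 < q < 1, let N ≥ 1 be an integer, and let z > 0 be real. Then [N]_q^{[1−Nz]_q} · Γ̃_{q^N}(1/N) ⋯ Γ̃_{q^N}((N−1)/N) · Γ̃_q(Nz) = Γ̃_{q^N}(z) · Γ̃_{q^N}(z + 1/N) ⋯ Γ̃_{q^N}(z + (N−1)/N); equivalently, [1−Nz]_q · log [N]_q + ∑_{k=1}^{N−1} F_{q^N}(k/N) + F_q(Nz) = ∑_{k=0}^{N−1} F_{q^N}(z + k/N). -/

import Mathlib

/-!
The formula is a termwise identity. Put `Q = q ^ N`. Since `F_Q(1) = 0`, the sum of `F_Q(k/N)` over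
`1 ≤ k ≤ N - 1` equals that of `F_Q((k+1)/N)` over `0 ≤ k < N`, so the claim reads
`∑_{k<N} (F_Q(z + k/N) - F_Q(1/N + k/N)) = F_q(Nz) + [1-Nz]_q log [N]_q`.

In the difference the `z`-independent part `Q^{n-1}` of each series term cancels, and the geometric
sum `∑_{k<N} Q^{(z+k/N)m} / (1 - Q^m) = q^{Nzm} / (1 - q^m)` turns the series for `Q` into the series
for `q` (`Fq_series_sum`). The remaining elementary part of `F_Q(w + k/N)` is a combination of
`1`, `k`, `q^{-k}` and `k q^{-k}`, so it is summed in closed form by the geometric and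
arithmetic-geometric sums (`fqElem_sum`); the `log (1 - Q)` contribution produces the factor
`log [N]_q` because `1 - Q = [N]_q (1 - q)`.
-/

/-- The logarithm `F_q(z) = log Γ̃_q(z)` of the `q`-gamma function associated with the
`q`-Hurwitz zeta function, given by its explicit closed form: for real `z > 0`,
`F_q(z) = ∑_{n=2}^∞ (1/n)(q^{z(n−1)} − q^{n−1})/(1 − q^{n−1}) − z + 1
  + ((q^{−z}(1 − (1−q)z) − 1)/(1−q)²) q log q + ((1 − q^{1−z})/(1−q)) log(1−q)`
(real powers of `q` via `rpow`). -/
noncomputable def Fq (q z : ℝ) : ℝ :=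
  (∑' n : ℕ, (1 / ((n : ℝ) + 2)) *
      (q ^ (z * ((n : ℝ) + 1)) - q ^ ((n : ℝ) + 1)) / (1 - q ^ ((n : ℝ) + 1)))
    - z + 1
    + ((q ^ (-z) * (1 - (1 - q) * z) - 1) / (1 - q) ^ 2) * q * Real.log q
    + ((1 - q ^ (1 - z)) / (1 - q)) * Real.log (1 - q)

/-- The `q`-gamma function `Γ̃_q(z) = exp F_q(z)` associated with the `q`-Hurwitz zeta
function. -/
noncomputable def GammaQ (q z : ℝ) : ℝ := Real.exp (Fq q z)

/-- The `n`-th term of the series part of `Fq q z`. -/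
noncomputable def fqTerm (q z : ℝ) (n : ℕ) : ℝ :=
  (1 / ((n : ℝ) + 2)) *
      (q ^ (z * ((n : ℝ) + 1)) - q ^ ((n : ℝ) + 1)) / (1 - q ^ ((n : ℝ) + 1))

/-- The part of `Fq q z` outside the series. -/
noncomputable def fqElem (q z : ℝ) : ℝ :=
  - z + 1
    + ((q ^ (-z) * (1 - (1 - q) * z) - 1) / (1 - q) ^ 2) * q * Real.log q
    + ((1 - q ^ (1 - z)) / (1 - q)) * Real.log (1 - q)

lemma Fq_eq (q z : ℝ) : Fq q z = (∑' n, fqTerm q z n) + fqElem q z := by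
  simp only [Fq, fqTerm, fqElem]
  ring

lemma Fq_one (q : ℝ) (hq0 : 0 < q) : Fq q 1 = 0 := by
  simp [Fq, Real.rpow_neg_one, hq0.ne']

lemma rpow_mul_succ (q z : ℝ) (hq0 : 0 < q) (n : ℕ) :
    q ^ (z * ((n : ℝ) + 1)) = (q ^ z) ^ (n + 1) := by
  rw [Real.rpow_mul hq0.le, ← Nat.cast_succ, Real.rpow_natCast]

lemma rpow_succ_cast (q : ℝ) (n : ℕ) : q ^ ((n : ℝ) + 1) = q ^ (n + 1) := by
  rw [← Nat.cast_succ, Real.rpow_natCast]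

lemma fqTerm_eq (q z : ℝ) (hq0 : 0 < q) (n : ℕ) :
    fqTerm q z n =
      (1 / ((n : ℝ) + 2)) * ((q ^ z) ^ (n + 1) - q ^ (n + 1)) / (1 - q ^ (n + 1)) := by
  rw [fqTerm, rpow_mul_succ q z hq0, rpow_succ_cast]

/-- The terms are dominated by `((q ^ z) ^ (n + 1) + q ^ (n + 1)) / (1 - q)`. -/
lemma summable_fqTerm (q z : ℝ) (hq0 : 0 < q) (hq1 : q < 1) (hz : 0 < z) :
    Summable (fqTerm q z) := by
  have hr0 : 0 < q ^ z := Real.rpow_pos_of_pos hq0 z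
  have hr1 : q ^ z < 1 := Real.rpow_lt_one hq0.le hq1 hz
  have hs : Summable (fun n : ℕ => ((q ^ z) ^ (n + 1) + q ^ (n + 1)) / (1 - q)) := by
    apply Summable.div_const
    exact ((summable_nat_add_iff 1).2 (summable_geometric_of_lt_one hr0.le hr1)).add
      ((summable_nat_add_iff 1).2 (summable_geometric_of_lt_one hq0.le hq1))
  refine Summable.of_norm_bounded hs fun n => ?_
  have hqn : q ^ (n + 1) ≤ q := pow_le_of_le_one hq0.le hq1.le (Nat.succ_ne_zero n)
  have hd : 0 < 1 - q ^ (n + 1) := by linarith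
  have ha : 0 < (q ^ z) ^ (n + 1) := by positivity
  have hb : 0 < q ^ (n + 1) := by positivity
  have hc : 1 / ((n : ℝ) + 2) ≤ 1 := by
    rw [div_le_one (by positivity)]
    linarith [(Nat.cast_nonneg n : (0 : ℝ) ≤ n)]
  have hc0 : 0 ≤ 1 / ((n : ℝ) + 2) := by positivity
  rw [fqTerm_eq q z hq0, Real.norm_eq_abs, abs_div, abs_mul, abs_of_nonneg hc0, abs_of_pos hd]
  have habs : |(q ^ z) ^ (n + 1) - q ^ (n + 1)| ≤ (q ^ z) ^ (n + 1) + q ^ (n + 1) := by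
    rw [abs_le]
    constructor <;> linarith
  have h1q : 0 < 1 - q := by linarith
  gcongr
  calc _ ≤ 1 * ((q ^ z) ^ (n + 1) + q ^ (n + 1)) := by gcongr
    _ = _ := one_mul _

lemma rpow_shift (q : ℝ) (hq0 : 0 < q) (N : ℕ) (hN : 1 ≤ N) (w : ℝ) (k : ℕ) :
    (q ^ N) ^ (w + (k : ℝ) / N) = q ^ ((N : ℝ) * w) * q ^ k := by
  have hN' : (N : ℝ) ≠ 0 := by positivity
  rw [← Real.rpow_natCast q N, ← Real.rpow_mul hq0.le, ← Real.rpow_natCast q k,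
    ← Real.rpow_add hq0]
  congr 1
  field_simp

/-- Termwise multiplication formula for the series, relative to the base point `z = 1 / N`. -/
lemma fqTerm_sum (q : ℝ) (hq0 : 0 < q) (hq1 : q < 1) (N : ℕ) (hN : 1 ≤ N) (z : ℝ) (n : ℕ) :
    ∑ k ∈ Finset.range N,
        (fqTerm (q ^ N) (z + (k : ℝ) / N) n - fqTerm (q ^ N) (1 / N + (k : ℝ) / N) n)
      = fqTerm q (N * z) n := by
  have hQ0 : 0 < q ^ N := by positivity
  have hN' : (N : ℝ) ≠ 0 := by positivity
  have hx1 : q ^ (n + 1) < 1 := pow_lt_one₀ hq0.le hq1 (Nat.succ_ne_zero n)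
  have hQ1 : (q ^ (n + 1)) ^ N < 1 := pow_lt_one₀ (by positivity) hx1 (by omega)
  have hg : (∑ k ∈ Finset.range N, (q ^ (n + 1)) ^ k) * (1 - q ^ (n + 1))
      = 1 - (q ^ (n + 1)) ^ N := by
    linear_combination -geom_sum_mul (q ^ (n + 1)) N
  have hterm : ∀ k ∈ Finset.range N,
      fqTerm (q ^ N) (z + (k : ℝ) / N) n - fqTerm (q ^ N) (1 / N + (k : ℝ) / N) n
        = (1 / ((n : ℝ) + 2)) * ((q ^ (N * z)) ^ (n + 1) - q ^ (n + 1))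
          / (1 - (q ^ (n + 1)) ^ N) * (q ^ (n + 1)) ^ k := by
    intro k _
    rw [fqTerm_eq _ _ hQ0, fqTerm_eq _ _ hQ0, rpow_shift q hq0 N hN, rpow_shift q hq0 N hN,
      mul_one_div_cancel hN', Real.rpow_one, pow_right_comm q N (n + 1), mul_pow, mul_pow,
      pow_right_comm q k (n + 1)]
    ring
  rw [Finset.sum_congr rfl hterm, ← Finset.mul_sum, fqTerm_eq q _ hq0]
  have h1 : 1 - q ^ (n + 1) ≠ 0 := by linarith
  have h2 : 1 - (q ^ (n + 1)) ^ N ≠ 0 := by linarith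
  rw [div_mul_eq_mul_div, div_eq_div_iff h2 h1, mul_assoc, hg]

lemma Fq_series_sum (q : ℝ) (hq0 : 0 < q) (hq1 : q < 1) (N : ℕ) (hN : 1 ≤ N)
    (z : ℝ) (hz : 0 < z) :
    ∑ k ∈ Finset.range N,
        ((∑' n, fqTerm (q ^ N) (z + (k : ℝ) / N) n)
          - ∑' n, fqTerm (q ^ N) (1 / N + (k : ℝ) / N) n)
      = ∑' n, fqTerm q (N * z) n := by
  have hQ0 : 0 < q ^ N := by positivity
  have hQ1 : q ^ N < 1 := pow_lt_one₀ hq0.le hq1 (by omega)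
  have hs : ∀ w : ℝ, 0 < w → ∀ k : ℕ, Summable (fqTerm (q ^ N) (w + (k : ℝ) / N)) :=
    fun w hw k => summable_fqTerm _ _ hQ0 hQ1 (by positivity)
  have hN0 : (0 : ℝ) < 1 / N := by positivity
  simp_rw [← fun k : ℕ => (hs z hz k).tsum_sub (hs _ hN0 k)]
  rw [← Summable.tsum_finsetSum fun k _ => (hs z hz k).sub (hs _ hN0 k)]
  exact tsum_congr fun n => fqTerm_sum q hq0 hq1 N hN z n

lemma arith_geom_sum (y : ℝ) (N : ℕ) :
    (∑ k ∈ Finset.range N, (k : ℝ) * y ^ k) * (1 - y) ^ 2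
      = y - N * y ^ N + (N - 1) * y ^ (N + 1) := by
  induction N with
  | zero => simp
  | succ n ih =>
    rw [Finset.sum_range_succ, add_mul, ih]
    push_cast
    ring

/-- Closed form of the elementary part summed over the shifts `k / N`: only the terms
that do not involve `w` are left as a sum. -/
lemma fqElem_sum (q : ℝ) (hq0 : 0 < q) (hq1 : q < 1) (N : ℕ) (hN : 1 ≤ N) (w : ℝ) :
    ∑ k ∈ Finset.range N, fqElem (q ^ N) (w + (k : ℝ) / N)
      = - N * w
        + q ^ (-((N : ℝ) * w)) * (1 - (1 - q) * (N * w)) / (1 - q) ^ 2 * q * Real.log q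
        - q * q ^ (-((N : ℝ) * w)) / (1 - q) * Real.log (1 - q ^ N)
        + ∑ k ∈ Finset.range N, (1 - (k : ℝ) / N
          - q ^ N * (N * Real.log q) / (1 - q ^ N) ^ 2 + Real.log (1 - q ^ N) / (1 - q ^ N)) := by
  have hQ0 : 0 < q ^ N := by positivity
  have hQ1 : q ^ N < 1 := pow_lt_one₀ hq0.le hq1 (by omega)
  have hN' : (N : ℝ) ≠ 0 := by positivity
  have h1 : 1 - q ≠ 0 := by linarith
  have h2 : 1 - q ^ N ≠ 0 := by linarith
  have hq : q ≠ 0 := hq0.ne'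
  have hS0 : q ^ N * (∑ k ∈ Finset.range N, q⁻¹ ^ k) = q * (1 - q ^ N) / (1 - q) := by
    have h := geom_sum_mul q⁻¹ N
    have hy : q ^ N * q⁻¹ ^ N = 1 := by rw [← mul_pow, mul_inv_cancel₀ hq, one_pow]
    have hy1 : q * q⁻¹ = 1 := mul_inv_cancel₀ hq
    rw [eq_div_iff h1]
    linear_combination q ^ N * q * h + q * hy
      - q ^ N * (∑ k ∈ Finset.range N, q⁻¹ ^ k) * hy1
  have hS1 : q ^ N * (∑ k ∈ Finset.range N, (k : ℝ) * q⁻¹ ^ k)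
      = (q * q ^ N - N * q ^ 2 + (N - 1) * q) / (1 - q) ^ 2 := by
    have h := arith_geom_sum q⁻¹ N
    have hy : q⁻¹ ^ N = (q ^ N)⁻¹ := inv_pow q N
    rw [pow_succ q⁻¹ N, hy] at h
    have h' : (1 - q⁻¹) ^ 2 = (1 - q) ^ 2 / q ^ 2 := by
      field_simp
      ring
    rw [h'] at h
    generalize ∑ k ∈ Finset.range N, (k : ℝ) * q⁻¹ ^ k = S at h ⊢
    field_simp at h ⊢
    linear_combination h
  have hterm : ∀ k ∈ Finset.range N, fqElem (q ^ N) (w + (k : ℝ) / N)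
      = - w
        + (q ^ (-((N : ℝ) * w)) * (1 - (1 - q ^ N) * w) * (N * Real.log q) / (1 - q ^ N) ^ 2
          - q ^ (-((N : ℝ) * w)) * Real.log (1 - q ^ N) / (1 - q ^ N)) * (q ^ N * q⁻¹ ^ k)
        - q ^ (-((N : ℝ) * w)) * Real.log q / (1 - q ^ N) * (q ^ N * ((k : ℝ) * q⁻¹ ^ k))
        + (1 - (k : ℝ) / N
          - q ^ N * (N * Real.log q) / (1 - q ^ N) ^ 2
          + Real.log (1 - q ^ N) / (1 - q ^ N)) := by
    intro k _
    have hp : (q ^ N) ^ (-(w + (k : ℝ) / N)) = q ^ (-((N : ℝ) * w)) * q⁻¹ ^ k := by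
      rw [Real.rpow_neg hQ0.le, rpow_shift q hq0 N hN, Real.rpow_neg hq0.le, mul_inv, inv_pow]
    have hp1 : (q ^ N) ^ (1 - (w + (k : ℝ) / N))
        = q ^ N * (q ^ (-((N : ℝ) * w)) * q⁻¹ ^ k) := by
      rw [sub_eq_add_neg, Real.rpow_add hQ0, Real.rpow_one, hp]
    rw [fqElem, hp, hp1, Real.log_pow]
    field_simp
    ring
  rw [Finset.sum_congr rfl hterm, Finset.sum_add_distrib, Finset.sum_sub_distrib,
    Finset.sum_add_distrib, ← Finset.mul_sum, ← Finset.mul_sum, ← Finset.mul_sum,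
    ← Finset.mul_sum, hS0, hS1, Finset.sum_const, Finset.card_range, nsmul_eq_mul]
  congr 1
  field_simp
  ring

/-- The logarithmic form of the multiplication formula, with `q ^ N` a natural power. -/
lemma Fq_multiplication (q : ℝ) (hq0 : 0 < q) (hq1 : q < 1) (N : ℕ) (hN : 1 ≤ N)
    (z : ℝ) (hz : 0 < z) :
    ((1 - q ^ (1 - (N : ℝ) * z)) / (1 - q)) * Real.log ((1 - q ^ N) / (1 - q))
        + (∑ k ∈ Finset.Icc 1 (N - 1), Fq (q ^ N) ((k : ℝ) / N))
        + Fq q ((N : ℝ) * z)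
      = ∑ k ∈ Finset.range N, Fq (q ^ N) (z + (k : ℝ) / N) := by
  have hQ0 : 0 < q ^ N := by positivity
  have hQ1 : q ^ N < 1 := pow_lt_one₀ hq0.le hq1 (by omega)
  have hN' : (N : ℝ) ≠ 0 := by positivity
  have h1 : 1 - q ≠ 0 := by linarith
  have h2 : 1 - q ^ N ≠ 0 := by linarith
  -- `F_Q(1) = 0` supplies the missing last term of the sum shifted to `range N`.
  have hbase : ∑ k ∈ Finset.Icc 1 (N - 1), Fq (q ^ N) ((k : ℝ) / N)
      = ∑ k ∈ Finset.range N, Fq (q ^ N) (1 / N + (k : ℝ) / N) := by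
    obtain ⟨M, rfl⟩ : ∃ M, N = M + 1 := ⟨N - 1, by omega⟩
    have hlast : (1 : ℝ) / ((M + 1 : ℕ) : ℝ) + (M : ℝ) / ((M + 1 : ℕ) : ℝ) = 1 := by
      rw [← add_div, div_eq_one_iff_eq hN']
      push_cast
      ring
    rw [Finset.sum_range_succ, hlast, Fq_one _ hQ0, add_zero, Nat.add_sub_cancel,
      Finset.range_eq_Ico, ← Finset.Ico_add_one_right_eq_Icc]
    rw [← Finset.sum_Ico_add' (fun k : ℕ => Fq (q ^ (M + 1)) ((k : ℝ) / (M + 1 : ℕ))) 0 M 1]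
    refine Finset.sum_congr rfl fun k _ => ?_
    congr 1
    push_cast
    ring
  have hser := Fq_series_sum q hq0 hq1 N hN z hz
  have hel := fqElem_sum q hq0 hq1 N hN z
  have hel1 := fqElem_sum q hq0 hq1 N hN (1 / N)
  rw [mul_one_div_cancel hN', Real.rpow_neg_one] at hel1
  rw [Finset.sum_sub_distrib] at hser
  have hlog : Real.log ((1 - q ^ N) / (1 - q)) = Real.log (1 - q ^ N) - Real.log (1 - q) :=
    Real.log_div h2 h1
  have hp : q ^ (1 - (N : ℝ) * z) = q * q ^ (-((N : ℝ) * z)) := by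
    rw [sub_eq_add_neg, Real.rpow_add hq0, Real.rpow_one]
  rw [hbase]
  simp only [Fq_eq, Finset.sum_add_distrib]
  rw [hel, hel1, hlog, ← hser, fqElem, hp]
  field_simp
  ring

/-- The `q`-analogue of the Gauss–Legendre multiplication formula: for `0 < q < 1`,
an integer `N ≥ 1` and real `z > 0`,
`[N]_q^{[1−Nz]_q} Γ̃_{q^N}(1/N) ⋯ Γ̃_{q^N}((N−1)/N) Γ̃_q(Nz)
  = Γ̃_{q^N}(z) Γ̃_{q^N}(z+1/N) ⋯ Γ̃_{q^N}(z+(N−1)/N)`; equivalently,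
`[1−Nz]_q log [N]_q + ∑_{k=1}^{N−1} F_{q^N}(k/N) + F_q(Nz) = ∑_{k=0}^{N−1} F_{q^N}(z+k/N)`. -/
theorem gauss_legendre_q (q : ℝ) (hq0 : 0 < q) (hq1 : q < 1) (N : ℕ) (hN : 1 ≤ N)
    (z : ℝ) (hz : 0 < z) :
    (((1 - q ^ (N : ℝ)) / (1 - q)) ^ ((1 - q ^ (1 - (N : ℝ) * z)) / (1 - q)) *
        (∏ k ∈ Finset.Icc 1 (N - 1), GammaQ (q ^ (N : ℝ)) ((k : ℝ) / N)) *
        GammaQ q ((N : ℝ) * z)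
      = ∏ k ∈ Finset.range N, GammaQ (q ^ (N : ℝ)) (z + (k : ℝ) / N)) ∧
    (((1 - q ^ (1 - (N : ℝ) * z)) / (1 - q)) * Real.log ((1 - q ^ (N : ℝ)) / (1 - q))
        + (∑ k ∈ Finset.Icc 1 (N - 1), Fq (q ^ (N : ℝ)) ((k : ℝ) / N))
        + Fq q ((N : ℝ) * z)
      = ∑ k ∈ Finset.range N, Fq (q ^ (N : ℝ)) (z + (k : ℝ) / N)) := by
  have hlog := Fq_multiplication q hq0 hq1 N hN z hz
  have hQ1 : q ^ N < 1 := pow_lt_one₀ hq0.le hq1 (by omega)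
  have hpos : 0 < (1 - q ^ N) / (1 - q) := div_pos (by linarith) (by linarith)
  rw [Real.rpow_natCast]
  refine ⟨?_, hlog⟩
  simp only [GammaQ]
  rw [Real.rpow_def_of_pos hpos, ← Real.exp_sum, ← Real.exp_sum, ← Real.exp_add, ← Real.exp_add,
    ← hlog, mul_comm (Real.log _)]
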